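/- Let ζ ∈ [π/2, π) (equivalently 0 ≤ Δ < 1), let N ≥ 1 and n ≥ 1 be integers, and let λ = (λ₁,…,λ_n) ∈ ℝⁿ be arbitrary. Then the symmetric n×n matrix J with entries J_{ii} = ξ(λ_i) − (1/N)·Σ_{ℓ≠i} K(λ_i−λ_ℓ) and J_{ij} = (1/N)·K(λ_i−λ_j) for i ≠ j is positive definite. -/

import Mathlib

open MeasureTheory Filter
open scoped Real BigOperators

noncomputable section

namespace BetheSix

/-! ### Kernels in the regime `-1 < Δ < 1` (`Δ = -cos ζ`, `ζ ∈ (0,π)`) -/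

def Kml (ζ x : ℝ) : ℝ := Real.sin (2 * ζ) / (2 * π * (Real.sinh x ^ 2 + Real.sin ζ ^ 2))

def xiMl (ζ x : ℝ) : ℝ := Real.sin ζ / (2 * π * (Real.sinh x ^ 2 + Real.sin (ζ / 2) ^ 2))

/-- the momentum `p(x) = 2π ∫₀ˣ ξ`. -/
def pMl (ζ x : ℝ) : ℝ := 2 * π * ∫ t in (0 : ℝ)..x, xiMl ζ t

/-- the phase `ϑ(x) = 2π ∫₀ˣ K`. -/
def thMl (ζ x : ℝ) : ℝ := 2 * π * ∫ t in (0 : ℝ)..x, Kml ζ t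

/-- the explicit density `ρ(x) = ρ(x|∞) = 1/(2ζ cosh(πx/ζ))`. -/
def rhoInf (ζ x : ℝ) : ℝ := 1 / (2 * ζ * Real.cosh (π * x / ζ))

/-- `g` is the solution `ρ(·|q)` of the continuum Bethe equation in the regime
`-1 < Δ < 1`: `g ∈ L¹(ℝ) ∩ L^∞(ℝ)` and `g(λ) + ∫_{-q}^q K(λ-μ) g(μ) dμ = ξ(λ)`. -/
def IsBEml (ζ q : ℝ) (g : ℝ → ℝ) : Prop :=
  Integrable g ∧ MemLp g ⊤ ∧
    ∀ l : ℝ, g l + ∫ m in (-q)..q, Kml ζ (l - m) * g m = xiMl ζ l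

/-! ### Kernels in the regime `Δ < -1` (`Δ = -cosh ζ`, `ζ > 0`) -/

def Kms (ζ x : ℝ) : ℝ := Real.sinh (2 * ζ) / (2 * π * (Real.sin x ^ 2 + Real.sinh ζ ^ 2))

def xiMs (ζ x : ℝ) : ℝ := Real.sinh ζ / (2 * π * (Real.sin x ^ 2 + Real.sinh (ζ / 2) ^ 2))

def pMs (ζ x : ℝ) : ℝ := 2 * π * ∫ t in (0 : ℝ)..x, xiMs ζ t

def thMs (ζ x : ℝ) : ℝ := 2 * π * ∫ t in (0 : ℝ)..x, Kms ζ t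

/-- the explicit `π`-periodic density `ρ(x) = (1/(2ζ)) Σ_{n∈ℤ} 1/cosh(π(πn-x)/ζ)`. -/
def rhoMs (ζ x : ℝ) : ℝ := (1 / (2 * ζ)) * ∑' n : ℤ, 1 / Real.cosh (π * (π * n - x) / ζ)

/-- `g` is the continuous solution `ρ(·|q)` of the continuum Bethe equation in the
regime `Δ < -1`. -/
def IsBEms (ζ q : ℝ) (g : ℝ → ℝ) : Prop :=
  Continuous g ∧
    ∀ l : ℝ, g l + ∫ m in (-q)..q, Kms ζ (l - m) * g m = xiMs ζ l

/-- In the regime `-1 < Δ < 1` the parameter `𝔮` ranges over `[0,∞]`.  The pair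
`(S, g)` encodes the interval `[-𝔮, 𝔮]` together with the density `ρ(·|𝔮)`:
either `𝔮 = q` is finite, `S = [-q,q]` and `g = ρ(·|q)` solves the continuum Bethe
equation, or `𝔮 = ∞`, `S = ℝ` and `g = ρ(·|∞)` is the explicit density. -/
def QDomainMl (ζ : ℝ) (S : Set ℝ) (g : ℝ → ℝ) : Prop :=
  (∃ q : ℝ, 0 ≤ q ∧ S = Set.Icc (-q) q ∧ IsBEml ζ q g) ∨
  (S = Set.univ ∧ g = rhoInf ζ)

/-! ### The logarithmic Bethe equations -/

/-- `lam` solves the logarithmic Bethe equations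
`(N/2π) p(λᵢ) - (1/2π) Σⱼ ϑ(λᵢ - λⱼ) = Iᵢ` with `Iᵢ = i - (n+1)/2` (`i` is 1-based). -/
def BetheEq (p th : ℝ → ℝ) (N n : ℕ) (lam : Fin n → ℝ) : Prop :=
  ∀ i : Fin n,
    ((N : ℝ) / (2 * π)) * p (lam i) - (1 / (2 * π)) * ∑ j, th (lam i - lam j)
      = ((i.1 : ℝ) + 1) - ((n : ℝ) + 1) / 2

/-- `λ_{n+1-i} = -λ_i` for all `i` (1-based indices). -/
def SymmetricVec {n : ℕ} (lam : Fin n → ℝ) : Prop :=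
  ∀ i : Fin n, lam ⟨n - 1 - i.1, by have := i.2; omega⟩ = -lam i

/-- `λ₁ < λ₂ < ⋯ < λ_n`. -/
def StrictOrderedVec {n : ℕ} (lam : Fin n → ℝ) : Prop :=
  ∀ i j : Fin n, i < j → lam i < lam j

/-- the cumulative function `G(y) = ∫₀^y g`. Since the densities `ρ(·|q)` are
positive, `G` is strictly increasing, and the quantile `Λ(x|q)` (with the
conventions `Λ(x|q) = ±∞` outside the range) satisfies, for every `y ∈ ℝ`:
`Λ(x|q) ≤ y ↔ (x-(n+1)/2)/N ≤ G(y)` and `y ≤ Λ(x|q) ↔ G(y) ≤ (x-(n+1)/2)/N`. -/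
def GG (g : ℝ → ℝ) (y : ℝ) : ℝ := ∫ t in (0 : ℝ)..y, g t

/-- `lam` is `(k,q)`-interlaced with respect to the density `g = ρ(·|q)`:
`Λ(i - k/2 | q) ≤ λ_i ≤ Λ(i + k/2 | q)` for all `i` (1-based), expressed through
the cumulative function `G` to accommodate the conventions `Λ = ±∞`. -/
def Interlaced (N n k : ℕ) (g : ℝ → ℝ) (lam : Fin n → ℝ) : Prop :=
  ∀ i : Fin n,
    (((i.1 : ℝ) + 1) - (k : ℝ) / 2 - ((n : ℝ) + 1) / 2) / N ≤ GG g (lam i) ∧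
    GG g (lam i) ≤ (((i.1 : ℝ) + 1) + (k : ℝ) / 2 - ((n : ℝ) + 1) / 2) / N

end BetheSix

namespace BetheSix

/-- the Jacobian of the map encoding the logarithmic Bethe equations:
`J_{ii} = ξ(λᵢ) - (1/N) Σ_{ℓ≠i} K(λᵢ-λ_ℓ)` and `J_{ij} = (1/N) K(λᵢ-λⱼ)` for `i ≠ j`. -/
def Jac (xi K : ℝ → ℝ) (N n : ℕ) (lam : Fin n → ℝ) : Matrix (Fin n) (Fin n) ℝ :=
  Matrix.of fun i j =>
    if i = j then xi (lam i) - (1 / (N : ℝ)) * ∑ l ∈ Finset.univ.erase i, K (lam i - lam l)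
    else (1 / (N : ℝ)) * K (lam i - lam j)

/-!
The Jacobian splits as `J = diag(ξ(λᵢ)) + L`, where `L` is the Laplacian of the complete graph with
weights `-K(λᵢ - λⱼ)/N`. For `ζ ∈ [π/2, π)` these weights are nonnegative, and they are symmetric
because `K` is even, so `⟨x, L x⟩ = ½ ∑ᵢⱼ wᵢⱼ (xᵢ - xⱼ)² ≥ 0`, while the diagonal part is positive
definite because `ξ > 0`.
-/

section WeightedLaplacian

open scoped Matrix

variable {V R : Type*} [Fintype V] [DecidableEq V]

/-- The Laplacian `D - w` of the weighted graph with weight matrix `w`, where `D` is the diagonal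
matrix of the row sums of `w`. Diagonal entries of `w` (loops) are allowed: they cancel. It isolates
the part of the Bethe Jacobian that comes from the kernel `K`. -/
def weightedLaplacian [AddCommGroup R] (w : Matrix V V R) : Matrix V V R :=
  Matrix.diagonal (fun i => ∑ j, w i j) - w

lemma isSymm_weightedLaplacian [AddCommGroup R] {w : Matrix V V R} (hw : w.IsSymm) :
    (weightedLaplacian w).IsSymm :=
  (Matrix.isSymm_diagonal _).sub hw

lemma dotProduct_weightedLaplacian_mulVec [CommRing R] (w : Matrix V V R) (x : V → R) :
    x ⬝ᵥ weightedLaplacian w *ᵥ x = ∑ i, ∑ j, w i j * (x i * (x i - x j)) := by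
  simp only [weightedLaplacian, Matrix.sub_mulVec, dotProduct, Pi.sub_apply,
    Matrix.mulVec_diagonal]
  refine Finset.sum_congr rfl fun i _ => ?_
  rw [Matrix.mulVec, dotProduct, Finset.sum_mul, ← Finset.sum_sub_distrib, Finset.mul_sum]
  exact Finset.sum_congr rfl fun j _ => by ring

lemma two_mul_dotProduct_weightedLaplacian_mulVec [CommRing R] {w : Matrix V V R}
    (hw : w.IsSymm) (x : V → R) :
    2 * (x ⬝ᵥ weightedLaplacian w *ᵥ x) = ∑ i, ∑ j, w i j * (x i - x j) ^ 2 := by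
  have swapped : ∑ i, ∑ j, w i j * (x i * (x i - x j)) =
      ∑ i, ∑ j, w i j * (x j * (x j - x i)) := by
    rw [Finset.sum_comm]
    simp only [hw.apply]
  rw [dotProduct_weightedLaplacian_mulVec, two_mul]
  nth_rewrite 2 [swapped]
  simp only [← Finset.sum_add_distrib]
  exact Finset.sum_congr rfl fun i _ => Finset.sum_congr rfl fun j _ => by ring

lemma posSemidef_weightedLaplacian [CommRing R] [LinearOrder R] [IsStrictOrderedRing R]
    [StarRing R] [TrivialStar R] {w : Matrix V V R} (hw : w.IsSymm) (w_nonneg : ∀ i j, 0 ≤ w i j) :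
    (weightedLaplacian w).PosSemidef := by
  refine .of_dotProduct_mulVec_nonneg ?_ fun x => ?_
  · rw [Matrix.IsHermitian, Matrix.conjTranspose_eq_transpose_of_trivial,
      isSymm_weightedLaplacian hw]
  · rw [star_trivial]
    refine nonneg_of_mul_nonneg_right ?_ (zero_lt_two' R)
    rw [two_mul_dotProduct_weightedLaplacian_mulVec hw]
    exact Finset.sum_nonneg fun i _ => Finset.sum_nonneg fun j _ =>
      mul_nonneg (w_nonneg i j) (sq_nonneg _)

end WeightedLaplacian

section Kernels

variable {ζ : ℝ}

lemma Kml_even (ζ : ℝ) : (Kml ζ).Even := fun x => by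
  rw [Kml, Kml, Real.sinh_neg, neg_sq]

lemma Kml_nonpos (hζ : ζ ∈ Set.Icc (π / 2) π) (x : ℝ) : Kml ζ x ≤ 0 := by
  have sin_two_mul_nonpos : Real.sin (2 * ζ) ≤ 0 := by
    rw [Real.sin_two_mul]
    have sin_nonneg : 0 ≤ Real.sin ζ :=
      Real.sin_nonneg_of_nonneg_of_le_pi (by linarith [hζ.1, Real.pi_pos]) hζ.2
    have cos_nonpos : Real.cos ζ ≤ 0 :=
      Real.cos_nonpos_of_pi_div_two_le_of_le hζ.1 (by linarith [hζ.2, Real.pi_pos])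
    exact mul_nonpos_of_nonneg_of_nonpos (by positivity) cos_nonpos
  exact div_nonpos_of_nonpos_of_nonneg sin_two_mul_nonpos (by positivity)

lemma xiMl_pos (hζ : ζ ∈ Set.Ioo 0 π) (x : ℝ) : 0 < xiMl ζ x := by
  have sin_pos : 0 < Real.sin ζ := Real.sin_pos_of_mem_Ioo hζ
  have sin_half_pos : 0 < Real.sin (ζ / 2) :=
    Real.sin_pos_of_pos_of_lt_pi (half_pos hζ.1) ((half_lt_self hζ.1).trans hζ.2)
  rw [xiMl]
  positivity

end Kernels

lemma Jac_eq_diagonal_add_weightedLaplacian (xi K : ℝ → ℝ) (N n : ℕ) (lam : Fin n → ℝ) :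
    Jac xi K N n lam = Matrix.diagonal (fun i => xi (lam i)) +
      weightedLaplacian (Matrix.of fun i j => 1 / (N : ℝ) * -K (lam i - lam j)) := by
  ext i j
  rcases eq_or_ne i j with rfl | hij
  · simp only [Jac, weightedLaplacian, Matrix.of_apply, Matrix.add_apply, Matrix.sub_apply,
      Matrix.diagonal_apply_eq, if_true, ← Finset.mul_sum, Finset.sum_neg_distrib,
      Finset.sum_erase_eq_sub (Finset.mem_univ i)]
    ring
  · simp only [Jac, weightedLaplacian, Matrix.of_apply, Matrix.add_apply, Matrix.sub_apply,
      Matrix.diagonal_apply_ne _ hij, if_neg hij]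
    ring

theorem bethe_jacobian_posdef_general {xi K : ℝ → ℝ} (xi_pos : ∀ x, 0 < xi x) (K_even : K.Even)
    (K_nonpos : ∀ x, K x ≤ 0) {N n : ℕ} (hN : 1 ≤ N) (lam : Fin n → ℝ) :
    (Jac xi K N n lam).PosDef := by
  have inv_N_pos : 0 < 1 / (N : ℝ) := one_div_pos.2 (Nat.cast_pos.2 hN)
  rw [Jac_eq_diagonal_add_weightedLaplacian]
  refine (Matrix.PosDef.diagonal fun i => xi_pos (lam i)).add_posSemidef
    (posSemidef_weightedLaplacian (Matrix.IsSymm.ext fun i j => ?symm) fun i j => ?nonneg)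
  case symm => rw [Matrix.of_apply, Matrix.of_apply, ← neg_sub (lam i), K_even]
  case nonneg => exact mul_nonneg inv_N_pos.le (neg_nonneg.2 (K_nonpos _))

/-- **Positive definiteness of the Bethe Jacobian for `0 ≤ Δ < 1`**
(Section 3.1): for `ζ ∈ [π/2, π)`, any `N, n ≥ 1` and an arbitrary vector
`λ ∈ ℝⁿ`, the Jacobian of the logarithmic Bethe equations is positive definite. -/
theorem bethe_jacobian_posdef (ζ : ℝ) (h1 : π / 2 ≤ ζ) (h2 : ζ < π)
    (N n : ℕ) (hN : 1 ≤ N) (hn : 1 ≤ n) (lam : Fin n → ℝ) :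
    (Jac (xiMl ζ) (Kml ζ) N n lam).PosDef :=
  bethe_jacobian_posdef_general (xiMl_pos ⟨Real.pi_div_two_pos.trans_le h1, h2⟩) (Kml_even ζ)
    (Kml_nonpos ⟨h1, h2.le⟩) hN lam

end BetheSix
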